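/- For all natural numbers m, n and p, the ℓ-adic q-binomial coefficients satisfy ⟨m+n; n⟩_λ · ⟨m+n+p; p⟩_λ = ⟨n+p; n⟩_λ · ⟨m+n+p; m⟩_λ. -/

import Mathlib

/-!
Both sides equal the `ℓ`-adic q-trinomial coefficient of `m`, `n`, `p`, which is zero as soon as
some carry occurs in the base-`ℓ` addition `m + n + p`. The coefficients factor by splitting off
the lowest digit (`lbinom_eq_mul`), so one argues by induction on the numbers. If the lowest digits
add up to less than `ℓ`, the lowest digits contribute equal factors (`qbinom_mul_qbinom`, both
being a quotient of q-factorials that do not vanish below `ℓ`) and the quotients by `ℓ` add up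
without carry. Otherwise both sides vanish: after a carry some digit of the sum is smaller
than the digit of a summand (`lbinom_mul_eq_zero`, applied to the right-hand side with `m` and `p`
exchanged).
-/

noncomputable section

namespace QD

/-- The q-binomial coefficient `[m; n]_q = ∏_{j=1}^{n} (q^{m-j+1} - q^{-m+j-1})/(q^j - q^{-j})`. -/
def qbinom (q : ℂ) (m : ℤ) (n : ℕ) : ℂ :=
  ∏ j ∈ Finset.range n, (q ^ (m - j) - q ^ (-m + j)) / (q ^ ((j : ℤ) + 1) - q ^ (-(j : ℤ) - 1))

/-- The `i`-th digit of `m` in base `ℓ`. -/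
def digit (ℓ m i : ℕ) : ℕ := m / ℓ ^ i % ℓ

/-- The `ℓ`-adic q-binomial coefficient `⟨m; n⟩_q = ∏_{i ≥ 0} [m_i; n_i]_q`, where `m_i, n_i`
are the base-`ℓ` digits of `m` and `n`.  (All factors with `i > m + n` equal `1` since the
corresponding digits vanish when `ℓ ≥ 2`, so the product may be cut off at `m + n + 1`.) -/
def lbinom (ℓ : ℕ) (q : ℂ) (m n : ℕ) : ℂ :=
  ∏ i ∈ Finset.range (m + n + 1), qbinom q (digit ℓ m i) (digit ℓ n i)


/-- The unnormalised q-factorial `∏_{j=1}^{n} (q^j - q^{-j})`. -/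
def qfac (q : ℂ) (n : ℕ) : ℂ :=
  ∏ j ∈ Finset.range n, (q ^ ((j : ℤ) + 1) - q ^ (-(j : ℤ) - 1))

/-- Below `ℓ` the q-factorial does not vanish: `q^j = q^{-j}` would give `ℓ ∣ 2j`, hence `ℓ ∣ j`
as `ℓ` is odd. -/
lemma qfac_ne_zero {ℓ : ℕ} (hodd : Odd ℓ) {q : ℂ} (hq : IsPrimitiveRoot q ℓ) {n : ℕ}
    (hn : n < ℓ) : qfac q n ≠ 0 := by
  have hq0 : q ≠ 0 := hq.ne_zero (by omega)
  refine Finset.prod_ne_zero_iff.mpr fun j hj h => ?_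
  have hj' := Finset.mem_range.mp hj
  have h1 : q ^ (2 * (j + 1)) = 1 := by
    have h2 : q ^ ((j : ℤ) + 1) = q ^ (-(j : ℤ) - 1) := sub_eq_zero.mp h
    have h3 : q ^ ((j : ℤ) + 1) * q ^ ((j : ℤ) + 1) = 1 := by
      nth_rewrite 1 [h2]
      rw [← zpow_add₀ hq0]
      simp
    rw [two_mul, pow_add]
    exact_mod_cast h3
  have h4 : ℓ ∣ j + 1 :=
    (Nat.Coprime.dvd_mul_left (Nat.coprime_two_right.mpr hodd)).mp (hq.dvd_of_pow_eq_one _ h1)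
  have := Nat.le_of_dvd (by omega) h4
  omega

lemma qbinom_eq_zero (q : ℂ) {m n : ℕ} (h : m < n) : qbinom q m n = 0 :=
  Finset.prod_eq_zero (Finset.mem_range.mpr h) (by simp)

lemma qfac_add (q : ℂ) (a b : ℕ) :
    qfac q (a + b) =
      qfac q a * ∏ j ∈ Finset.range b, (q ^ (((a + b : ℕ) : ℤ) - j) - q ^ (-((a + b : ℕ) : ℤ) + j)) := by
  unfold qfac
  rw [Finset.prod_range_add, ← Finset.prod_range_reflect (n := b)]
  congr 1
  refine Finset.prod_congr rfl fun j hj => ?_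
  have hj' := Finset.mem_range.mp hj
  have h : ((b - 1 - j : ℕ) : ℤ) = b - 1 - j := by omega
  push_cast [h]
  congr 2 <;> ring

lemma qbinom_add_eq_div {q : ℂ} {a : ℕ} (ha : qfac q a ≠ 0) (b : ℕ) :
    qbinom q (a + b : ℕ) b = qfac q (a + b) / (qfac q a * qfac q b) := by
  rw [qfac_add, mul_div_mul_left _ _ ha, qbinom, Finset.prod_div_distrib, qfac]

/-- The digit-level identity: both sides are the q-trinomial coefficient
`[a+b+c]! / ([a]! [b]! [c]!)`. -/
lemma qbinom_mul_qbinom {ℓ : ℕ} (hodd : Odd ℓ) {q : ℂ} (hq : IsPrimitiveRoot q ℓ) {a b c : ℕ}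
    (h : a + b + c < ℓ) :
    qbinom q (a + b : ℕ) b * qbinom q (a + b + c : ℕ) c
      = qbinom q (b + c : ℕ) b * qbinom q (a + b + c : ℕ) a := by
  have hne : ∀ k, k < ℓ → qfac q k ≠ 0 := fun k hk => qfac_ne_zero hodd hq hk
  have h1 : b + c = c + b := add_comm b c
  have h2 : a + b + c = (c + b) + a := by omega
  rw [qbinom_add_eq_div (hne a (by omega)), qbinom_add_eq_div (hne (a + b) (by omega)),
    h2, h1, qbinom_add_eq_div (hne c (by omega)), qbinom_add_eq_div (hne (c + b) (by omega))]
  have := hne a (by omega)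
  have := hne b (by omega)
  have := hne c (by omega)
  have := hne (a + b) (by omega)
  have := hne (c + b) (by omega)
  field_simp

/-- The product defining `⟨m; n⟩` may be cut off at any `N ≥ n`. -/
lemma lbinom_eq_prod {ℓ : ℕ} (hℓ : 1 < ℓ) (q : ℂ) (m : ℕ) {n N : ℕ} (hN : n ≤ N) :
    lbinom ℓ q m n = ∏ i ∈ Finset.range N, qbinom q (digit ℓ m i) (digit ℓ n i) := by
  have key : ∀ M, n ≤ M → ∏ i ∈ Finset.range M, qbinom q (digit ℓ m i) (digit ℓ n i)
      = ∏ i ∈ Finset.range n, qbinom q (digit ℓ m i) (digit ℓ n i) := by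
    intro M hM
    refine (Finset.prod_subset (Finset.range_mono hM) fun i _ hi => ?_).symm
    have hi' : n ≤ i := by simpa using hi
    have hd : digit ℓ n i = 0 := by
      rw [digit, Nat.div_eq_of_lt (hi'.trans_lt (Nat.lt_pow_self hℓ)), Nat.zero_mod]
    simp [hd, qbinom]
  rw [lbinom, key _ (by omega), key N hN]

/-- Splitting off the lowest digit. -/
lemma lbinom_eq_mul {ℓ : ℕ} (hℓ : 1 < ℓ) (q : ℂ) (m n : ℕ) :
    lbinom ℓ q m n = qbinom q (m % ℓ : ℕ) (n % ℓ) * lbinom ℓ q (m / ℓ) (n / ℓ) := by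
  rw [lbinom_eq_prod hℓ q m (Nat.le_succ n), lbinom_eq_prod hℓ q (m / ℓ) (Nat.div_le_self n ℓ),
    Finset.prod_range_succ', mul_comm]
  simp [digit, Nat.div_div_eq_div_mul, pow_succ']

/-- A carry in the lowest digit of `m + n + p` makes one of the two coefficients vanish. -/
lemma lbinom_mul_eq_zero {ℓ : ℕ} (hℓ : 1 < ℓ) (q : ℂ) {m n p : ℕ}
    (h : ℓ ≤ m % ℓ + n % ℓ + p % ℓ) :
    lbinom ℓ q (m + n) n * lbinom ℓ q (m + n + p) p = 0 := by
  have hm := Nat.mod_lt m (by omega : 0 < ℓ)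
  have hp := Nat.mod_lt p (by omega : 0 < ℓ)
  rw [lbinom_eq_mul hℓ q (m + n), lbinom_eq_mul hℓ q (m + n + p)]
  by_cases hc : ℓ ≤ m % ℓ + n % ℓ
  · have := Nat.add_mod_add_of_le_add_mod hc
    rw [qbinom_eq_zero q (by omega : (m + n) % ℓ < n % ℓ)]
    simp
  · have h1 := Nat.add_mod_of_add_mod_lt (not_le.mp hc)
    have := Nat.add_mod_add_of_le_add_mod (a := m + n) (b := p) (c := ℓ) (by omega)
    rw [qbinom_eq_zero q (by omega : (m + n + p) % ℓ < p % ℓ)]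
    simp

/-- for all natural numbers `m`, `n` and `p`, the `ℓ`-adic q-binomial coefficients
satisfy `⟨m+n; n⟩_λ · ⟨m+n+p; p⟩_λ = ⟨n+p; n⟩_λ · ⟨m+n+p; m⟩_λ`. -/
theorem lbinom_mul_lbinom (ℓ : ℕ) (hℓ : 1 < ℓ) (hodd : Odd ℓ) (q : ℂ)
    (hq : IsPrimitiveRoot q ℓ) (m n p : ℕ) :
    lbinom ℓ q (m + n) n * lbinom ℓ q (m + n + p) p
      = lbinom ℓ q (n + p) n * lbinom ℓ q (m + n + p) m := by
  induction hs : m + n + p using Nat.strong_induction_on generalizing m n p with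
  | _ s ih =>
    subst hs
    by_cases h : ℓ ≤ m % ℓ + n % ℓ + p % ℓ
    · rw [lbinom_mul_eq_zero hℓ q h]
      have h' := lbinom_mul_eq_zero hℓ q (m := p) (n := n) (p := m) (by omega)
      rw [add_comm n p, show m + n + p = p + n + m by omega, h']
    · have h1 : (m + n) % ℓ = m % ℓ + n % ℓ := Nat.add_mod_of_add_mod_lt (by omega)
      have h2 : (n + p) % ℓ = n % ℓ + p % ℓ := Nat.add_mod_of_add_mod_lt (by omega)
      have h3 : (m + n + p) % ℓ = m % ℓ + n % ℓ + p % ℓ := by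
        rw [Nat.add_mod_of_add_mod_lt (by omega), h1]
      have d1 : (m + n) / ℓ = m / ℓ + n / ℓ := Nat.add_div_eq_of_add_mod_lt (by omega)
      have d2 : (n + p) / ℓ = n / ℓ + p / ℓ := Nat.add_div_eq_of_add_mod_lt (by omega)
      have d3 : (m + n + p) / ℓ = m / ℓ + n / ℓ + p / ℓ := by
        rw [Nat.add_div_eq_of_add_mod_lt (by omega), d1]
      rcases Nat.eq_zero_or_pos (m + n + p) with h0 | hpos
      · obtain ⟨rfl, rfl, rfl⟩ : m = 0 ∧ n = 0 ∧ p = 0 := by omega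
        rfl
      · have hlt : m / ℓ + n / ℓ + p / ℓ < m + n + p := d3 ▸ Nat.div_lt_self hpos hℓ
        have hi := ih _ hlt (m / ℓ) (n / ℓ) (p / ℓ) rfl
        have hd := qbinom_mul_qbinom hodd hq (not_le.mp h)
        rw [lbinom_eq_mul hℓ q (m + n), lbinom_eq_mul hℓ q (m + n + p) p,
          lbinom_eq_mul hℓ q (n + p), lbinom_eq_mul hℓ q (m + n + p) m,
          h1, h2, h3, d1, d2, d3, mul_mul_mul_comm, hd, hi, mul_mul_mul_comm]

end QD
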